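/- arXiv:2604.17578 — 2 statements merged into one kernel-verified Lean document; each statement's English description precedes it below -/
import Mathlib

section
/- Let S₁, …, S_m be subsets of {1, …, T}, and for each t ∈ {1, …, T} let n_t := #{ i ∈ {1,…,m} : t ∈ S_i } denote the number of sets containing t. Assume n_t ≥ 1 for every t ∈ {1, …, T}. Then for all nonnegative real numbers a₁, …, a_T, it holds that Σ_{i=1}^m ( Σ_{t ∈ S_i} a_t/n_t )² ≤ (1 / min_{t∈{1,…,T}} n_t) · ( Σ_{t=1}^T a_t )². -/
open Finset

/-- Combinatorial inequality: if `S₁, …, S_m ⊆ {1,…,T}` and `n t` counts how many of the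
sets contain `t` (with every `n t ≥ 1`), then for nonnegative `a₁, …, a_T`,
`Σ_i (Σ_{t ∈ S_i} a_t/n_t)² ≤ (1 / min_t n_t) · (Σ_t a_t)²`. -/
theorem sum_sq_partial_sums_le
    {T m : ℕ} (hT : 0 < T)
    (S : Fin m → Finset (Fin T))
    (n : Fin T → ℕ)
    (hn : ∀ t, n t = (Finset.univ.filter (fun i => t ∈ S i)).card)
    (hn1 : ∀ t, 1 ≤ n t)
    (a : Fin T → ℝ) (ha : ∀ t, 0 ≤ a t) :
    ∑ i, (∑ t ∈ S i, a t / (n t : ℝ)) ^ 2 ≤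
      (1 / ((Finset.univ.inf' (Finset.univ_nonempty_iff.mpr (Fin.pos_iff_nonempty.mp hT)) n : ℕ) : ℝ)) *
        (∑ t, a t) ^ 2 := by
  set N := Finset.univ.inf' (Finset.univ_nonempty_iff.mpr (Fin.pos_iff_nonempty.mp hT)) n with hN
  have hNle : ∀ t, N ≤ n t := fun t => Finset.inf'_le _ (Finset.mem_univ t)
  have hN1 : 1 ≤ N := Finset.le_inf' _ _ (fun t _ => hn1 t)
  have hNpos : (0 : ℝ) < N := by exact_mod_cast hN1
  have hnpos : ∀ t, (0 : ℝ) < n t := fun t => by exact_mod_cast hn1 t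
  have hsum : ∑ i, ∑ t ∈ S i, a t / (n t : ℝ) = ∑ t, a t := by
    have h1 : ∀ i, ∑ t ∈ S i, a t / (n t : ℝ)
        = ∑ t, if t ∈ S i then a t / (n t : ℝ) else 0 := by
      intro i
      simp
    simp_rw [h1]
    rw [Finset.sum_comm]
    refine Finset.sum_congr rfl fun t _ => ?_
    rw [← Finset.sum_filter, Finset.sum_const, ← hn t, nsmul_eq_mul]
    exact mul_div_cancel₀ _ (hnpos t).ne'
  have hle : ∀ i, ∑ t ∈ S i, a t / (n t : ℝ) ≤ (∑ t, a t) / N := by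
    intro i
    rw [Finset.sum_div]
    calc ∑ t ∈ S i, a t / (n t : ℝ) ≤ ∑ t ∈ S i, a t / (N : ℝ) := by
          refine Finset.sum_le_sum fun t _ => ?_
          exact div_le_div_of_nonneg_left (ha t) hNpos (by exact_mod_cast hNle t)
      _ ≤ ∑ t, a t / (N : ℝ) :=
          Finset.sum_le_sum_of_subset_of_nonneg (Finset.subset_univ _)
            (fun t _ _ => div_nonneg (ha t) hNpos.le)
  calc ∑ i, (∑ t ∈ S i, a t / (n t : ℝ)) ^ 2
      ≤ ∑ i, (∑ t, a t) / N * ∑ t ∈ S i, a t / (n t : ℝ) := by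
        refine Finset.sum_le_sum fun i _ => ?_
        rw [sq]
        exact mul_le_mul_of_nonneg_right (hle i)
          (Finset.sum_nonneg fun t _ => div_nonneg (ha t) (hnpos t).le)
    _ = 1 / (N : ℝ) * (∑ t, a t) ^ 2 := by
        rw [← Finset.mul_sum, hsum]
        ring
end

section
/- Suppose α, β, γ > 0 and ζ ∈ ℝ. Let r* := max{ζ, 0} + √(max{ln(β·γ^{α/2})/γ, 0}). Then the infimum over r ≥ 0 of the function r ↦ r^α + β·exp(−γ(r − ζ)²) is at most min{ β + (max{ζ, 0})^α , γ^{−α/2} + (r*)^α }; in particular, (r*)^α + β·exp(−γ(r* − ζ)²) ≤ γ^{−α/2} + (r*)^α. -/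
open Real

/-- **Optimization of `r ↦ r^α + β·exp(−γ(r−ζ)²)`.** For `α, β, γ > 0` and `ζ ∈ ℝ`, with
`r* := max{ζ,0} + √(max{ln(β γ^{α/2})/γ, 0})`, the infimum over `r ≥ 0` of
`r^α + β·exp(−γ(r−ζ)²)` is at most
`min{β + (max{ζ,0})^α, γ^{−α/2} + (r*)^α}`; in particular
`(r*)^α + β·exp(−γ(r*−ζ)²) ≤ γ^{−α/2} + (r*)^α`. -/
theorem opt_r_bound (α β γ ζ : ℝ) (hα : 0 < α) (hβ : 0 < β) (hγ : 0 < γ) :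
    (sInf {v : ℝ | ∃ r : ℝ, 0 ≤ r ∧ v = r ^ α + β * Real.exp (-γ * (r - ζ) ^ 2)} ≤
      min (β + (max ζ 0) ^ α)
        (γ ^ (-(α / 2)) +
          (max ζ 0 + Real.sqrt (max (Real.log (β * γ ^ (α / 2)) / γ) 0)) ^ α)) ∧
    ((max ζ 0 + Real.sqrt (max (Real.log (β * γ ^ (α / 2)) / γ) 0)) ^ α +
        β * Real.exp (-γ *
          ((max ζ 0 + Real.sqrt (max (Real.log (β * γ ^ (α / 2)) / γ) 0)) - ζ) ^ 2) ≤
      γ ^ (-(α / 2)) +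
        (max ζ 0 + Real.sqrt (max (Real.log (β * γ ^ (α / 2)) / γ) 0)) ^ α) := by
  have key : β * Real.exp (-γ *
          ((max ζ 0 + Real.sqrt (max (Real.log (β * γ ^ (α / 2)) / γ) 0)) - ζ) ^ 2) ≤
      γ ^ (-(α / 2)) := by
    have hg : 0 < γ ^ (α / 2) := Real.rpow_pos_of_pos hγ _
    have hp : 0 < β * γ ^ (α / 2) := mul_pos hβ hg
    have hs2 := Real.sq_sqrt (le_max_right (Real.log (β * γ ^ (α / 2)) / γ) 0)
    have hs0 := Real.sqrt_nonneg (max (Real.log (β * γ ^ (α / 2)) / γ) 0)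
    have hm := le_max_left (Real.log (β * γ ^ (α / 2)) / γ) 0
    set s := Real.sqrt (max (Real.log (β * γ ^ (α / 2)) / γ) 0)
    have h1 : s ≤ max ζ 0 + s - ζ := by linarith [le_max_left ζ 0]
    have h2 : s ^ 2 ≤ (max ζ 0 + s - ζ) ^ 2 := pow_le_pow_left₀ hs0 h1 2
    have h3 : Real.log (β * γ ^ (α / 2)) / γ ≤ (max ζ 0 + s - ζ) ^ 2 := by linarith
    rw [div_le_iff₀ hγ] at h3
    have h4 : -γ * (max ζ 0 + s - ζ) ^ 2 ≤ -Real.log (β * γ ^ (α / 2)) := by linarith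
    calc β * Real.exp (-γ * (max ζ 0 + s - ζ) ^ 2)
        ≤ β * Real.exp (-Real.log (β * γ ^ (α / 2))) :=
          mul_le_mul_of_nonneg_left (Real.exp_le_exp.mpr h4) hβ.le
      _ = γ ^ (-(α / 2)) := by
          rw [Real.exp_neg, Real.exp_log hp, Real.rpow_neg hγ.le]
          field_simp
  have hbdd : BddBelow {v : ℝ | ∃ r : ℝ, 0 ≤ r ∧ v = r ^ α + β * Real.exp (-γ * (r - ζ) ^ 2)} := by
    refine ⟨0, ?_⟩
    rintro v ⟨r, hr, rfl⟩
    positivity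
  refine ⟨le_min ?_ ?_, by linarith⟩
  · refine (csInf_le hbdd ⟨max ζ 0, le_max_right _ _, rfl⟩).trans ?_
    have h : Real.exp (-γ * (max ζ 0 - ζ) ^ 2) ≤ 1 := by
      apply Real.exp_le_one_iff.mpr
      have : 0 ≤ γ * (max ζ 0 - ζ) ^ 2 := by positivity
      linarith
    have := mul_le_mul_of_nonneg_left h hβ.le
    linarith
  · refine (csInf_le hbdd ⟨_, add_nonneg (le_max_right ζ 0) (Real.sqrt_nonneg
      (max (Real.log (β * γ ^ (α / 2)) / γ) 0)), rfl⟩).trans ?_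
    linarith
end
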